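/- For every integer q ≥ 3 there exists a constant C_q > 0 such that for every integer n ≥ 2, every real δ with 0 < δ ≤ 1, and every spanoid S on [n] that is a q-LCS with error-tolerance δ, the rank of S satisfies rank(S) ≤ C_q · δ^{-1/(q-1)} · n^{(q-2)/(q-1)} · log₂ n. -/

import Mathlib

open scoped BigOperators

/-- A spanoid on ground set `X`: a set of inference rules `(A, i)`,
read as "`A` spans `i`". -/
abbrev SpanoidOn (X : Type) : Type := Set (Set X × X)

/-- The span of `T`: the smallest superset `T'` of `T` such that whenever `(A, i)` is a
rule with `A ⊆ T'`, also `i ∈ T'`. -/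
def sSpan {X : Type} (S : SpanoidOn X) (T : Set X) : Set X :=
  ⋂₀ {T' : Set X | T ⊆ T' ∧ ∀ p ∈ S, p.1 ⊆ T' → p.2 ∈ T'}

/-- The rank of a spanoid: the minimum size of a subset spanning the whole ground set. -/
noncomputable def sRank {X : Type} [Fintype X] (S : SpanoidOn X) : ℕ :=
  sInf {k : ℕ | ∃ T : Set X, T.ncard = k ∧ sSpan S T = Set.univ}

/-- A set is closed if it equals its own span. -/
def sClosed {X : Type} (S : SpanoidOn X) (B : Set X) : Prop := sSpan S B = B

/-- A set is open if its complement is closed. -/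
def sOpen {X : Type} (S : SpanoidOn X) (B : Set X) : Prop := sClosed S Bᶜ

/-- A code `C ⊆ K^X` is consistent with the spanoid `S` if for every rule `(A, i)` of `S`
there is a function `g` with `c i = g (c|_A)` for all codewords `c ∈ C`. -/
def sConsistent {X K : Type} (S : SpanoidOn X) (C : Set (X → K)) : Prop :=
  ∀ p ∈ S, ∃ g : (↥p.1 → K) → K, ∀ c ∈ C, c p.2 = g (fun a => c a.1)

/-- The functional rank of a spanoid: the supremum of `log |C| / log |Σ|` over all finite
alphabets `Σ` (of size at least 2) and all codes `C ⊆ Σ^X` consistent with `S`. -/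
noncomputable def sFrank {X : Type} (S : SpanoidOn X) : ℝ :=
  sSup {d : ℝ | ∃ m : ℕ, 2 ≤ m ∧ ∃ C : Set (X → Fin m),
    sConsistent S C ∧ d = Real.log (Nat.card C) / Real.log m}

/-- Feasibility for the entropy linear program of a spanoid. -/
def sEntFeasible {X : Type} (S : SpanoidOn X) (f : Set X → ℝ) : Prop :=
  f ∅ = 0 ∧ (∀ i : X, f {i} ≤ 1) ∧
  (∀ A B : Set X, f (A ∪ B) + f (A ∩ B) ≤ f A + f B) ∧
  (∀ A B : Set X, A ⊆ B → f A ≤ f B) ∧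
  (∀ A : Set X, ∀ i ∈ sSpan S A, f (A ∪ {i}) = f A)

/-- The optimum of the entropy linear program: maximize `f(X)` over feasible `f`. -/
noncomputable def sLPentropy {X : Type} (S : SpanoidOn X) : ℝ :=
  sSup {y : ℝ | ∃ f : Set X → ℝ, sEntFeasible S f ∧ y = f Set.univ}

/-- The optimum of the covering linear program: minimize `∑ i, x i` over `x ≥ 0` such that
`∑_{i ∈ B} x i ≥ 1` for every nonempty open set `B`. -/
noncomputable def sLPcover {X : Type} [Fintype X] (S : SpanoidOn X) : ℝ :=
  sInf {y : ℝ | ∃ x : X → ℝ, (∀ i, 0 ≤ x i) ∧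
    (∀ B : Set X, B.Nonempty → sOpen S B → 1 ≤ ∑ i, B.indicator x i) ∧
    y = ∑ i, x i}

/-- A spanoid on `[n]` is a `q`-LCS with error-tolerance `δ` if every `i` is spanned by at
least `δ n` pairwise disjoint `q`-element subsets. -/
def sIsLCS {n : ℕ} (q : ℕ) (δ : ℝ) (S : SpanoidOn (Fin n)) : Prop :=
  ∀ i : Fin n, ∃ M : Finset (Finset (Fin n)),
    δ * n ≤ (M.card : ℝ) ∧
    (∀ A ∈ M, A.card = q) ∧
    ((M : Set (Finset (Fin n))).Pairwise fun A B => Disjoint A B) ∧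
    ∀ A ∈ M, ((A : Set (Fin n)), i) ∈ S

/-!
Keep a set `V` of known elements and a map `f` such that every `k` is derivable from `V` and its
root `f k`; initially `V = ∅` and `f = id`. Put `p = (δ n)^(-1/(q-1))`. All but `2 n p` of the roots
`i` have at most `δ n / 2` elements in their fibre `f⁻¹(i)`, and then at least `δ n / 2` of the
disjoint rules for `i` involve some `k` outside it. If a random set `R` of density `p` contains the
other `q - 1` elements of such a rule, then `i` is derivable from `V ∪ R` and the root `f k ≠ i`;
as the rules are disjoint and `p^(q-1) δ n = 1`, this has probability at least `1/3`. So for some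
`R` of size `O(n p)`, a constant fraction of the roots are each derivable from another root. Fix a
linear order and remove either those whose substitute is smaller or those whose substitute is
larger, whichever are more numerous; this creates no cycles, so `O(log n)` rounds leave at most
`4 n p` roots, and these are added to `V`.
-/

open Finset MeasureTheory ProbabilityTheory
open scoped Function

section RandomSubset

variable {α ι : Type*} (p : unitInterval)

lemma measurableSet_superset (B : Finset α) : MeasurableSet {R : Set α | (B : Set α) ⊆ R} := by
  have h : {R : Set α | (B : Set α) ⊆ R} = ⋂ i ∈ B, {R : Set α | i ∈ R} := by
    ext R
    simp [Set.subset_def]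
  rw [h]
  exact B.measurableSet_biInter fun i _ => measurableSet_setOfPred.2 (measurable_set_mem i)

lemma setBernoulli_univ_superset (B : Finset α) :
    setBer(Set.univ, p) {R | (B : Set α) ⊆ R} = (unitInterval.toNNReal p : ENNReal) ^ #B := by
  have h : (fun P : α → Prop => {i | P i}) ⁻¹' {R | (B : Set α) ⊆ R} =
      (B : Set α).pi fun _ => {True} := by
    ext P
    simp [Set.subset_def, Set.mem_pi]
  rw [setBernoulli_apply', h, Measure.infinitePi_pi _ fun _ _ => .of_discrete]
  simp

lemma measureReal_setBernoulli_univ_superset (B : Finset α) :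
    setBer(Set.univ, p).real {R | (B : Set α) ⊆ R} = (p : ℝ) ^ #B := by
  simp [measureReal_def, setBernoulli_univ_superset]

lemma iIndepSet_superset {B : ι → Finset α} (hB : Pairwise (Disjoint on B)) :
    iIndepSet (fun a => {R : Set α | (B a : Set α) ⊆ R}) setBer(Set.univ, p) := by
  classical
  refine (iIndepSet_iff_meas_biInter fun a => measurableSet_superset (B a)).2 fun G => ?_
  have h : ⋂ a ∈ G, {R : Set α | (B a : Set α) ⊆ R} = {R | (G.biUnion B : Set α) ⊆ R} := by
    ext R
    simp
  rw [h, setBernoulli_univ_superset, card_biUnion fun a _ b _ hab => hB hab, ← prod_pow_eq_pow_sum]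
  simp only [setBernoulli_univ_superset]

lemma one_sub_exp_le_setBernoulli_exists_subset [Fintype ι] {B : ι → Finset α}
    (hB : Pairwise (Disjoint on B)) :
    1 - Real.exp (-∑ a, (p : ℝ) ^ #(B a)) ≤
      setBer(Set.univ, p).real {R | ∃ a, (B a : Set α) ⊆ R} := by
  have hmeas (a : ι) := measurableSet_superset (B a)
  have hmiss : setBer(Set.univ, p).real {R | ∃ a, (B a : Set α) ⊆ R}ᶜ =
      ∏ a, (1 - (p : ℝ) ^ #(B a)) := by
    have hcompl : {R : Set α | ∃ a, (B a : Set α) ⊆ R}ᶜ =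
        ⋂ a ∈ (univ : Finset ι), {R : Set α | (B a : Set α) ⊆ R}ᶜ := by
      ext R
      simp
    have hindep := (iIndepSet_iff _ _).1 (iIndepSet_superset p hB) univ fun a _ =>
      (MeasurableSpace.measurableSet_generateFrom (Set.mem_singleton _)).compl
    rw [measureReal_def, hcompl, hindep, ENNReal.toReal_prod]
    refine prod_congr rfl fun a _ => ?_
    rw [← measureReal_def, probReal_compl_eq_one_sub (hmeas a),
      measureReal_setBernoulli_univ_superset]
  have hle : ∏ a, (1 - (p : ℝ) ^ #(B a)) ≤ Real.exp (-∑ a, (p : ℝ) ^ #(B a)) := by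
    rw [← sum_neg_distrib, Real.exp_sum]
    exact prod_le_prod (fun a _ => sub_nonneg.2 (pow_le_one₀ p.2.1 p.2.2))
      fun a _ => Real.one_sub_le_exp_neg _
  have hhit : MeasurableSet {R : Set α | ∃ a, (B a : Set α) ⊆ R} := by
    simpa only [Set.ofPred_exists] using MeasurableSet.iUnion hmeas
  rw [probReal_compl_eq_one_sub hhit] at hmiss
  linarith

variable {p}

open Classical in
lemma integral_card_filter {Ω : Type*} [MeasurableSpace Ω] {μ : Measure Ω} [IsFiniteMeasure μ]
    (T : Finset ι) {E : ι → Set Ω} (hE : ∀ i ∈ T, MeasurableSet (E i)) :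
    ∫ ω, (#{i ∈ T | ω ∈ E i} : ℝ) ∂μ = ∑ i ∈ T, μ.real (E i) := by
  have hcard (ω : Ω) : (#{i ∈ T | ω ∈ E i} : ℝ) = ∑ i ∈ T, (E i).indicator 1 ω := by
    simp [Set.indicator_apply]
  rw [integral_congr_ae (.of_forall hcard),
    integral_finsetSum _ fun i hi => (integrable_const 1).indicator (hE i hi)]
  exact sum_congr rfl fun i hi => integral_indicator_one (hE i hi)

lemma integral_ncard_setBernoulli_univ [Fintype α] :
    ∫ R : Set α, (R.ncard : ℝ) ∂setBer(Set.univ, p) = Fintype.card α * p := by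
  classical
  have hncard (R : Set α) : R.ncard = #{i : α | R ∈ {R : Set α | i ∈ R}} := by
    rw [Set.ncard_eq_toFinset_card']
    congr 1
    ext i
    simp
  have hmem (i : α) : setBer(Set.univ, p).real {R : Set α | i ∈ R} = p := by
    simpa using measureReal_setBernoulli_univ_superset p {i}
  simp only [hncard]
  rw [integral_card_filter univ fun i _ => .of_discrete]
  simp [hmem]

lemma exists_card_le_and_le_card_filter [Fintype α] [Nonempty α] (hp : 0 < p) (T : Finset ι)
    (E : ι → Set (Set α)) {c : ℝ} (hc : 0 < c) (hE : ∀ i ∈ T, c ≤ setBer(Set.univ, p).real (E i)) :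
    ∃ R : Finset α, #R ≤ 2 / c * (Fintype.card α * p) ∧
      ∃ C ⊆ T, c / 2 * #T ≤ #C ∧ ∀ i ∈ C, (R : Set α) ∈ E i := by
  classical
  have hp' : (0 : ℝ) < p := hp
  obtain rfl | hT := T.eq_empty_or_nonempty
  · exact ⟨∅, by simpa using by positivity, ∅, by simp⟩
  have : (0 : ℝ) < #T := mod_cast hT.card_pos
  set N : ℝ := Fintype.card α * p
  have hN : 0 < N := by positivity
  -- Maximise the number of realised events minus `l` times the size of the random set; `l` is such
  -- that the expected penalty is half of the guaranteed expected number of events.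
  set l : ℝ := c * #T / (2 * N) with hl
  have hmean : c / 2 * #T ≤
      ∫ R : Set α, ((#{i ∈ T | R ∈ E i} : ℝ) - l * R.ncard) ∂setBer(Set.univ, p) := by
    rw [integral_sub .of_finite .of_finite, integral_const_mul,
      integral_card_filter T fun i _ => .of_discrete, integral_ncard_setBernoulli_univ]
    have hsum := card_nsmul_le_sum T _ c hE
    have hlN : l * N = c * #T / 2 := by rw [hl]; field_simp
    rw [nsmul_eq_mul] at hsum
    linarith
  obtain ⟨R, hR⟩ := exists_integral_le (μ := setBer(Set.univ, p))
    (f := fun R : Set α => (#{i ∈ T | R ∈ E i} : ℝ) - l * R.ncard) .of_finite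
  replace hR := hmean.trans hR
  have hCT : (#{i ∈ T | R ∈ E i} : ℝ) ≤ #T := mod_cast card_filter_le _ _
  have hlR : 0 ≤ l * R.ncard := by positivity
  refine ⟨R.toFinset, ?_, {i ∈ T | R ∈ E i}, filter_subset _ _, by linarith, by simp⟩
  rw [← Set.ncard_eq_toFinset_card']
  have hle : l * R.ncard ≤ #T := by
    have : 0 ≤ c / 2 * #T := by positivity
    linarith
  calc (R.ncard : ℝ) ≤ #T / l := (le_div_iff₀' (by positivity)).2 hle
    _ = 2 / c * N := by rw [hl]; field_simp

end RandomSubset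

section Dominating

variable {α : Type*} {r : α → α → Prop} [Std.Refl r] [IsTrans α r] {T C : Finset α}

lemma exists_mem_sdiff_rel_of_wellFounded [DecidableEq α] {lt : α → α → Prop} (wf : WellFounded lt)
    (hC : ∀ i ∈ C, ∃ s ∈ T, lt s i ∧ r s i) (t : α) (ht : t ∈ T) : ∃ t' ∈ T \ C, r t' t := by
  induction t using wf.induction with
  | _ t ih =>
    by_cases htC : t ∈ C
    · obtain ⟨s, hsT, hst, hrst⟩ := hC t htC
      obtain ⟨t', ht', hrt's⟩ := ih s hst hsT
      exact ⟨t', ht', trans_of r hrt's hrst⟩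
    · exact ⟨t, mem_sdiff.2 ⟨ht, htC⟩, refl_of r t⟩

lemma exists_dominating_subset [Finite α] (hCT : C ⊆ T) (hC : ∀ i ∈ C, ∃ s ∈ T, s ≠ i ∧ r s i) :
    ∃ T' ⊆ T, (∀ t ∈ T, ∃ t' ∈ T', r t' t) ∧ 2 * #T' + #C ≤ 2 * #T := by
  classical
  -- On each of the two parts of `C` the map `g` is monotone, so following it leaves that part: the
  -- larger part may be removed from `T`.
  let _ : LinearOrder α := linearOrderOfSTO WellOrderingRel
  choose! g hgT hne hgr using hC
  have hdown := exists_mem_sdiff_rel_of_wellFounded (C := {i ∈ C | g i < i}) (T := T) (r := r)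
    wellFounded_lt fun i hi => by
      rw [mem_filter] at hi
      exact ⟨g i, hgT i hi.1, hi.2, hgr i hi.1⟩
  have hup := exists_mem_sdiff_rel_of_wellFounded (C := {i ∈ C | ¬ g i < i}) (T := T) (r := r)
    wellFounded_gt fun i hi => by
      rw [mem_filter, not_lt] at hi
      exact ⟨g i, hgT i hi.1, hi.2.lt_of_ne' (hne i hi.1), hgr i hi.1⟩
  have hcard := card_filter_add_card_filter_not (s := C) (fun i => g i < i)
  have hdownT := card_sdiff_add_card_eq_card ((filter_subset (fun i => g i < i) C).trans hCT)
  have hupT := card_sdiff_add_card_eq_card ((filter_subset (fun i => ¬ g i < i) C).trans hCT)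
  obtain h | h := le_total #{i ∈ C | g i < i} #{i ∈ C | ¬ g i < i}
  · exact ⟨_, sdiff_subset, hup, by omega⟩
  · exact ⟨_, sdiff_subset, hdown, by omega⟩

end Dominating

section Fibers

variable {α β : Type*} [DecidableEq β]

lemma card_filter_lt_card_fiber_mul_le [Fintype α] (f : α → β) (T : Finset β) (c : ℝ) :
    #{i ∈ T | c < #{k | f k = i}} * c ≤ Fintype.card α := by
  have hsum : ∑ i ∈ T with c < #{k | f k = i}, #{k | f k = i} ≤ Fintype.card α := by
    rw [sum_card_fiberwise_eq_card_filter]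
    exact card_filter_le _ _
  calc #{i ∈ T | c < #{k | f k = i}} * c
      ≤ ∑ i ∈ T with c < #{k | f k = i}, (#{k | f k = i} : ℝ) := by
        rw [← nsmul_eq_mul]
        exact card_nsmul_le_sum _ _ _ fun i hi => (mem_filter.1 hi).2.le
    _ ≤ Fintype.card α := mod_cast hsum

lemma half_card_le_card_small_fibers [Fintype α] {p m : ℝ} (hp : 0 ≤ p) (hpm : 1 ≤ p * m)
    {f : α → β} {T : Finset β} (hT : 4 * (Fintype.card α * p) ≤ #T) :
    #T / 2 ≤ (#{i ∈ T | #{k | f k = i} ≤ m / 2} : ℝ) := by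
  have hm : 0 < m := pos_of_mul_pos_right (one_pos.trans_le hpm) hp
  have hlarge : (#{i ∈ T | m / 2 < #{k | f k = i}} : ℝ) ≤ 2 * (Fintype.card α * p) := by
    have := card_filter_lt_card_fiber_mul_le f T (m / 2)
    refine le_of_mul_le_mul_right (this.trans ?_) (half_pos hm)
    calc (Fintype.card α : ℝ) ≤ Fintype.card α * (p * m) :=
          le_mul_of_one_le_right (by positivity) hpm
      _ = 2 * (Fintype.card α * p) * (m / 2) := by ring
  have hsplit := card_filter_add_card_filter_not (s := T) (fun i => (#{k | f k = i} : ℝ) ≤ m / 2)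
  simp only [not_le] at hsplit
  have : (#{i ∈ T | #{k | f k = i} ≤ m / 2} : ℝ) + #{i ∈ T | m / 2 < #{k | f k = i}} = #T :=
    mod_cast hsplit
  linarith

lemma card_filter_subset_le_card {M : Finset (Finset β)}
    (hM : (M : Set (Finset β)).Pairwise Disjoint) (hne : ∀ A ∈ M, A.Nonempty) (F : Finset β) :
    #{A ∈ M | A ⊆ F} ≤ #F := by
  have hsub : (({A ∈ M | A ⊆ F} : Finset (Finset β)) : Set (Finset β)) ⊆ M :=
    coe_subset.2 (filter_subset _ _)
  calc #{A ∈ M | A ⊆ F} ≤ #({A ∈ M | A ⊆ F}.biUnion id) :=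
        card_le_card_biUnion (hM.mono hsub) fun A hA => hne A (mem_filter.1 hA).1
    _ ≤ #F := card_le_card (biUnion_subset.2 fun A hA => (mem_filter.1 hA).2)

end Fibers

section Span

variable {X : Type} (S : SpanoidOn X) {T U A : Set X} {i : X}

lemma subset_sSpan (T : Set X) : T ⊆ sSpan S T :=
  Set.subset_sInter fun _ h => h.1

variable {S}

lemma mem_sSpan_of_rule (hA : (A, i) ∈ S) (h : A ⊆ sSpan S T) : i ∈ sSpan S T :=
  fun _ hT' => hT'.2 _ hA (h.trans (Set.sInter_subset_of_mem hT'))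

lemma sSpan_subset_sSpan (h : T ⊆ sSpan S U) : sSpan S T ⊆ sSpan S U :=
  Set.sInter_subset_of_mem ⟨h, fun _ hp hs => mem_sSpan_of_rule hp hs⟩

lemma sSpan_mono (h : T ⊆ U) : sSpan S T ⊆ sSpan S U :=
  sSpan_subset_sSpan (h.trans (subset_sSpan S U))

lemma sRank_le_card_of_eq_univ [Fintype X] {W : Finset X} (hW : sSpan S (W : Set X) = Set.univ) :
    sRank S ≤ #W :=
  Nat.sInf_le ⟨W, Set.ncard_coe_finset W, hW⟩

/-- `a` spans `b` modulo `V` if `b` can be derived from `a` once the elements of `V` are known. -/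
def SpansModulo (S : SpanoidOn X) (V : Set X) (a b : X) : Prop := b ∈ sSpan S (insert a V)

instance (V : Set X) : Std.Refl (SpansModulo S V) where
  refl _ := subset_sSpan S _ (Set.mem_insert _ _)

instance (V : Set X) : IsTrans X (SpansModulo S V) where
  trans a _ _ hab hbc :=
    sSpan_subset_sSpan
      (Set.insert_subset hab ((Set.subset_insert a V).trans (subset_sSpan S _))) hbc

lemma SpansModulo.mono {V V' : Set X} {a b : X} (h : SpansModulo S V a b) (hV : V ⊆ V') :
    SpansModulo S V' a b :=
  sSpan_mono (Set.insert_subset_insert hV) h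

lemma spansModulo_of_rule {V : Set X} {a k : X} (hA : (A, i) ∈ S) (hk : SpansModulo S V a k)
    (h : A \ {k} ⊆ V) : SpansModulo S V a i := by
  refine mem_sSpan_of_rule hA fun j hj => ?_
  obtain rfl | hjk := eq_or_ne j k
  · exact hk
  · exact subset_sSpan S _ (Set.mem_insert_of_mem _ (h ⟨hj, hjk⟩))

/-- `f` assigns to every element a root that spans it modulo `V`. -/
def IsRootMap (S : SpanoidOn X) (V : Set X) (f : X → X) : Prop := ∀ k, SpansModulo S V (f k) k

lemma isRootMap_id (V : Set X) : IsRootMap S V id := fun k => refl_of (SpansModulo S V) k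

lemma IsRootMap.sRank_le [Fintype X] [DecidableEq X] {V : Finset X} {f : X → X}
    (hf : IsRootMap S V f) : sRank S ≤ #V + #(univ.image f) := by
  have hspan : sSpan S (V ∪ univ.image f : Finset X) = Set.univ :=
    Set.eq_univ_of_forall fun k => sSpan_mono (Set.insert_subset (by simp) (by simp)) (hf k)
  exact (sRank_le_card_of_eq_univ hspan).trans (card_union_le _ _)

end Span

/-- `S` is locally correctable: every element is spanned by at least `m` pairwise disjoint
`q`-element sets. The parameter `m` plays the role of `δ n` in `sIsLCS`. -/
def IsLocallyCorrectable {X : Type} (S : SpanoidOn X) (q : ℕ) (m : ℝ) : Prop :=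
  ∀ i : X, ∃ M : Finset (Finset X), m ≤ #M ∧ (∀ A ∈ M, #A = q) ∧
    (M : Set (Finset X)).Pairwise Disjoint ∧ ∀ A ∈ M, ((A : Set X), i) ∈ S

section LocallyCorrectable

variable {X : Type} [Fintype X] [DecidableEq X] {S : SpanoidOn X} {q : ℕ} {m : ℝ}
  {p : unitInterval}

lemma one_third_le_setBernoulli_exists_spansModulo (hq : 1 ≤ q) (hp : (p : ℝ) ^ (q - 1) * m = 1)
    (hS : IsLocallyCorrectable S q m) {V : Set X} {f : X → X} (hf : IsRootMap S V f) {i : X}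
    (hi : #{k | f k = i} ≤ m / 2) :
    1 / 3 ≤ setBer(Set.univ, p).real
      {R : Set X | ∃ s ∈ univ.image f, s ≠ i ∧ SpansModulo S (V ∪ R) s i} := by
  obtain ⟨M, hmM, hMq, hMdisj, hMS⟩ := hS i
  set G : Finset (Finset X) := {A ∈ M | ¬ A ⊆ ({k | f k = i} : Finset X)}
  have hGM (A : G) : A.1 ∈ M := (mem_filter.1 A.2).1
  have hGcard : m / 2 ≤ #G := by
    have hsplit := card_filter_add_card_filter_not (s := M) (· ⊆ ({k | f k = i} : Finset X))
    have hinside := card_filter_subset_le_card hMdisj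
      (fun A hA => card_pos.1 (hMq A hA ▸ hq)) {k | f k = i}
    have : (#M : ℝ) ≤ #({k | f k = i} : Finset X) + #G := mod_cast hsplit ▸ by gcongr
    linarith
  have hexit (A : G) : ∃ k ∈ A.1, f k ≠ i := by
    simpa [not_subset] using (mem_filter.1 A.2).2
  choose k hkA hki using hexit
  have hdisj : Pairwise (Disjoint on fun A : G => A.1.erase (k A)) := fun A A' hne =>
    (hMdisj (hGM A) (hGM A') (Subtype.coe_injective.ne hne)).mono (erase_subset _ _)
      (erase_subset _ _)
  have hsum : 1 / 2 ≤ ∑ A : G, (p : ℝ) ^ #(A.1.erase (k A)) := by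
    have hcard (A : G) : #(A.1.erase (k A)) = q - 1 := by
      rw [card_erase_of_mem (hkA A), hMq _ (hGM A)]
    simp only [hcard, sum_const, card_univ, Fintype.card_coe, nsmul_eq_mul]
    calc (1 / 2 : ℝ) = m / 2 * p ^ (q - 1) := by linarith
      _ ≤ #G * p ^ (q - 1) := by have := p.2.1; gcongr
  have hexp : Real.exp (-∑ A : G, (p : ℝ) ^ #(A.1.erase (k A))) ≤ 2 / 3 := by
    rw [Real.exp_neg, inv_le_comm₀ (Real.exp_pos _) (by norm_num)]
    linarith [Real.add_one_le_exp (∑ A : G, (p : ℝ) ^ #(A.1.erase (k A)))]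
  calc (1 / 3 : ℝ) ≤ 1 - Real.exp (-∑ A : G, (p : ℝ) ^ #(A.1.erase (k A))) := by linarith
    _ ≤ setBer(Set.univ, p).real {R | ∃ A : G, (A.1.erase (k A) : Set X) ⊆ R} :=
      one_sub_exp_le_setBernoulli_exists_subset p hdisj
    _ ≤ _ := measureReal_mono <| by
      rintro R ⟨A, hAR⟩
      refine ⟨f (k A), mem_image_of_mem f (mem_univ _), hki A, spansModulo_of_rule (hMS _ (hGM A))
        ((hf (k A)).mono Set.subset_union_left) ?_⟩
      rw [← coe_erase]
      exact hAR.trans Set.subset_union_right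

-- One round: half of the roots have small fibres, half of the expected third of these is hit, and
-- the order splits these once more, so a fraction `1/2 * 1/6 * 1/2 = 1/24` disappears.
lemma IsRootMap.exists_card_image_le [Nonempty X] (hq : 2 ≤ q) (hp : (p : ℝ) ^ (q - 1) * m = 1)
    (hS : IsLocallyCorrectable S q m) {V : Finset X} {f : X → X} (hf : IsRootMap S V f)
    (hroots : 4 * (Fintype.card X * (p : ℝ)) ≤ (#(univ.image f) : ℝ)) :
    ∃ (V' : Finset X) (f' : X → X), IsRootMap S V' f' ∧
      #V' ≤ #V + 6 * (Fintype.card X * (p : ℝ)) ∧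
      #(univ.image f') ≤ (23 / 24 : ℝ) * #(univ.image f) := by
  have hp0 : 0 < p := bot_lt_iff_ne_bot.2 <| by
    rintro rfl
    simp [show q - 1 ≠ 0 by omega] at hp
  obtain ⟨R, hR, C, hCT, hC, hRC⟩ := exists_card_le_and_le_card_filter hp0
    {i ∈ univ.image f | #{k | f k = i} ≤ m / 2}
    (fun i => {R : Set X | ∃ s ∈ univ.image f, s ≠ i ∧ SpansModulo S (V ∪ R) s i})
    (by norm_num : (0 : ℝ) < 1 / 3) fun i hi => one_third_le_setBernoulli_exists_spansModulo
      (by omega) hp hS hf (mem_filter.1 hi).2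
  obtain ⟨T', -, hT', hT'card⟩ := exists_dominating_subset (hCT.trans (filter_subset _ _)) hRC
  choose! h hhT' hhr using hT'
  have himage (k : X) : f k ∈ univ.image f := mem_image_of_mem f (mem_univ k)
  refine ⟨V ∪ R, h ∘ f, fun k => ?_, ?_, ?_⟩
  · rw [coe_union]
    exact trans_of _ (hhr _ (himage k)) ((hf k).mono Set.subset_union_left)
  · have : (#(V ∪ R) : ℝ) ≤ #V + #R := mod_cast card_union_le V R
    linarith
  · have hpm : 1 ≤ p * m := by
      rw [← hp]
      gcongr
      · exact (pos_of_mul_pos_right (hp ▸ one_pos) (pow_nonneg p.2.1 _)).le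
      · exact pow_le_of_le_one p.2.1 p.2.2 (by omega)
    have hsmall := half_card_le_card_small_fibers (f := f) p.2.1 hpm hroots
    have hle : (#(univ.image (h ∘ f)) : ℝ) ≤ #T' :=
      mod_cast card_le_card (image_subset_iff.2 fun k _ => hhT' _ (himage k))
    have : (2 * #T' + #C : ℝ) ≤ 2 * #(univ.image f) := mod_cast hT'card
    linarith

lemma exists_isRootMap_card_image_le [Nonempty X] (hq : 2 ≤ q) (hp : (p : ℝ) ^ (q - 1) * m = 1)
    (hS : IsLocallyCorrectable S q m) (t : ℕ) :
    ∃ (V : Finset X) (f : X → X), IsRootMap S V f ∧ #V ≤ t * (6 * (Fintype.card X * (p : ℝ))) ∧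
      (#(univ.image f) : ℝ) ≤
        max (4 * (Fintype.card X * (p : ℝ))) ((23 / 24) ^ t * Fintype.card X) := by
  induction t with
  | zero => exact ⟨∅, id, isRootMap_id _, by simp, by simp⟩
  | succ t ih =>
    obtain ⟨V, f, hf, hV, hroots⟩ := ih
    obtain hfew | hmany := le_or_gt (#(univ.image f) : ℝ) (4 * (Fintype.card X * (p : ℝ)))
    · refine ⟨V, f, hf, hV.trans ?_, hfew.trans (le_max_left _ _)⟩
      have := p.2.1
      gcongr
      simp
    · obtain ⟨V', f', hf', hV', hroots'⟩ := hf.exists_card_image_le hq hp hS hmany.le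
      refine ⟨V', f', hf', ?_, hroots'.trans (le_max_of_le_right ?_)⟩
      · push_cast
        linarith
      · rw [pow_succ', mul_assoc]
        gcongr
        exact (le_max_iff.1 hroots).resolve_left hmany.not_ge

end LocallyCorrectable

section Parameters

variable {q N δ : ℝ}

lemma one_le_logb_two (hN : 2 ≤ N) : 1 ≤ Real.logb 2 N := by
  rwa [Real.le_logb_iff_rpow_le one_lt_two (by positivity), Real.rpow_one]

lemma rpow_mul_rpow_eq_mul_rpow (hq : q ≠ 1) (hδ : 0 ≤ δ) (hN : 0 < N) :
    δ ^ (-(1 / (q - 1))) * N ^ ((q - 2) / (q - 1)) = N * (δ * N) ^ (-(1 / (q - 1))) := by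
  have hexponent : (q - 2) / (q - 1) = 1 + -(1 / (q - 1)) := by
    have := sub_ne_zero.2 hq
    field_simp
    ring
  rw [hexponent, Real.rpow_add hN, Real.rpow_one, Real.mul_rpow hδ hN.le]
  ring

lemma rpow_neg_one_div_pow_mul_self {m : ℝ} (hm : 0 < m) {q : ℕ} (hq : 2 ≤ q) :
    (m ^ (-(1 / ((q : ℝ) - 1)))) ^ (q - 1) * m = 1 := by
  have hq' : (q : ℝ) - 1 = (q - 1 : ℕ) := by rw [Nat.cast_sub (by omega), Nat.cast_one]
  rw [Real.rpow_neg hm.le, hq', one_div, inv_pow, Real.rpow_inv_natCast_pow hm.le (by omega),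
    inv_mul_cancel₀ hm.ne']

end Parameters

section RankBound

variable {X : Type} [Fintype X] {S : SpanoidOn X} {q : ℕ}

lemma sRank_le_mul_logb {m : ℝ} {p : unitInterval} (hq : 2 ≤ q) (hp : (p : ℝ) ^ (q - 1) * m = 1)
    (hS : IsLocallyCorrectable S q m) (hX : 2 ≤ Fintype.card X) :
    (sRank S : ℝ) ≤ 208 * (Fintype.card X * (p : ℝ)) * Real.logb 2 (Fintype.card X) := by
  classical
  have : Nonempty X := Fintype.card_pos_iff.1 (by omega)
  set N := Fintype.card X
  set L := Nat.log 2 N + 1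
  obtain ⟨V, f, hf, hV, hroots⟩ := exists_isRootMap_card_image_le hq hp hS (17 * L)
  have hdecay : (23 / 24 : ℝ) ^ (17 * L) * N < 1 := by
    have hN : (N : ℝ) < 2 ^ L := mod_cast Nat.lt_pow_succ_log_self one_lt_two N
    calc (23 / 24 : ℝ) ^ (17 * L) * N ≤ (1 / 2) ^ L * N := by
          rw [pow_mul]
          gcongr
          norm_num
      _ < (1 / 2) ^ L * 2 ^ L := by gcongr
      _ = 1 := by rw [← mul_pow]; norm_num
  have hrootpos : (1 : ℝ) ≤ #(univ.image f) := mod_cast (univ_nonempty.image f).card_pos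
  have hfew : (#(univ.image f) : ℝ) ≤ 4 * (N * p) :=
    (le_max_iff.1 hroots).resolve_right (hdecay.trans_le hrootpos).not_ge
  have hlog : 1 ≤ Real.logb 2 N := one_le_logb_two (mod_cast hX)
  have hL : (L : ℝ) ≤ 2 * Real.logb 2 N := by
    have := Real.natLog_le_logb N 2
    push_cast [L] at this ⊢
    linarith
  have hNp : 0 ≤ N * (p : ℝ) := mul_nonneg (Nat.cast_nonneg _) p.2.1
  calc (sRank S : ℝ) ≤ #V + #(univ.image f) := mod_cast hf.sRank_le
    _ ≤ (17 * L : ℕ) * (6 * (N * p)) + 4 * (N * p) := add_le_add hV hfew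
    _ = 102 * (N * p) * L + 4 * (N * p) * 1 := by push_cast; ring
    _ ≤ 102 * (N * p) * (2 * Real.logb 2 N) + 4 * (N * p) * Real.logb 2 N := by gcongr
    _ = 208 * (N * p) * Real.logb 2 N := by ring

theorem q_LCS_rank_upper_bound_general {δ : ℝ} (hq : 2 ≤ q) (hX : 2 ≤ Fintype.card X) (hδ : 0 < δ)
    (hS : IsLocallyCorrectable S q (δ * Fintype.card X)) :
    (sRank S : ℝ) ≤ 208 * δ ^ (-(1 / ((q : ℝ) - 1))) *
      (Fintype.card X : ℝ) ^ (((q : ℝ) - 2) / ((q : ℝ) - 1)) *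
        Real.logb 2 (Fintype.card X) := by
  have hX' : (2 : ℝ) ≤ Fintype.card X := mod_cast hX
  have hq' : (2 : ℝ) ≤ q := mod_cast hq
  set N := (Fintype.card X : ℝ)
  have hm : 0 < δ * N := by positivity
  have hexp : -(1 / ((q : ℝ) - 1)) ≤ 0 := neg_nonpos.2 (one_div_nonneg.2 (by linarith))
  rw [mul_assoc 208, rpow_mul_rpow_eq_mul_rpow (by linarith) hδ.le (by positivity)]
  obtain hm1 | hm1 := le_total 1 (δ * N)
  · exact sRank_le_mul_logb (p := ⟨_, by positivity, Real.rpow_le_one_of_one_le_of_nonpos hm1 hexp⟩)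
      hq (rpow_neg_one_div_pow_mul_self hm hq) hS hX
  · have hp := Real.one_le_rpow_of_pos_of_le_one_of_nonpos hm hm1 hexp
    have hlog := one_le_logb_two hX'
    have hrank : (sRank S : ℝ) ≤ N :=
      Nat.cast_le.2 <| sRank_le_card_of_eq_univ (W := univ) <| by
        simpa using Set.univ_subset_iff.1 (subset_sSpan S Set.univ)
    calc (sRank S : ℝ) ≤ 1 * (N * 1) * 1 := by simpa using hrank
      _ ≤ 208 * (N * (δ * N) ^ (-(1 / ((q : ℝ) - 1)))) * Real.logb 2 N := by
        gcongr
        norm_num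

end RankBound

/-- For every `q ≥ 3`, every `q`-LCS with error-tolerance `δ` on `[n]` has rank
at most `C_q · δ^{-1/(q-1)} · n^{(q-2)/(q-1)} · log₂ n`. -/
theorem q_LCS_rank_upper_bound :
    ∀ q : ℕ, 3 ≤ q → ∃ C : ℝ, 0 < C ∧ ∀ n : ℕ, 2 ≤ n → ∀ δ : ℝ, 0 < δ → δ ≤ 1 →
      ∀ S : SpanoidOn (Fin n), sIsLCS q δ S →
        (sRank S : ℝ) ≤ C * δ ^ (-(1 / ((q : ℝ) - 1))) *
          (n : ℝ) ^ (((q : ℝ) - 2) / ((q : ℝ) - 1)) * Real.logb 2 n := by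
  intro q hq
  refine ⟨208, by norm_num, fun n hn δ hδ _ S hS => ?_⟩
  have hbound := q_LCS_rank_upper_bound_general (X := Fin n) (S := S) (q := q) (δ := δ) (by omega)
    (by simpa using hn) hδ (by rw [Fintype.card_fin]; exact hS)
  simpa only [Fintype.card_fin] using hbound
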